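/- arXiv:2111.14981 — 2 statements merged into one kernel-verified Lean document; each statement's English description precedes it below -/
import Mathlib

section
/- Let d ≥ 1 and let φ : ℕ → (0,∞) be a positive increasing function with ∑_{n=1}^∞ 1/φ(n) < ∞. For Lebesgue-almost every α = (α₁,…,α_d) ∈ ℝ^d and every index 1 ≤ j ≤ d there is a constant C(α,φ,j) such that for all N ≥ 3, ∑_{n=1}^{⌊N²(log N)²⌋} 1 / ( n·∏_{1≤i≤d, i≠j} ‖nα_i‖ ) ≤ C(α,φ,j)·(log N)^d·φ(log log N)^d. -/
open MeasureTheory Finset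

noncomputable section

/-- Distance from `y` to the nearest integer. -/
def nid (y : ℝ) : ℝ := |y - round y|

lemma nid_nonneg (y : ℝ) : 0 ≤ nid y := abs_nonneg _

lemma nid_eq_norm (y : ℝ) : nid y = ‖(y : UnitAddCircle)‖ := UnitAddCircle.norm_eq.symm

lemma continuous_nid : Continuous nid := by
  have h : nid = fun y : ℝ => ‖(y : UnitAddCircle)‖ := funext nid_eq_norm
  rw [h]
  exact continuous_norm.comp (AddCircle.continuous_mk' 1)

lemma periodic_nid : Function.Periodic nid 1 := fun y => by
  simp [nid_eq_norm]

/-- The cutoff below which `‖nx‖` is exceptionally small. -/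
def cutoff (n : ℕ) : ℝ := 1 / ((n : ℝ) + 1) ^ 3

lemma cutoff_pos (n : ℕ) : 0 < cutoff n := by unfold cutoff; positivity

/-- A continuous regularization of `1 / ‖nx‖`. -/
def regInv (n : ℕ) (x : ℝ) : ℝ := 1 / (nid (n * x) + cutoff n)

lemma regInv_nonneg (n : ℕ) (x : ℝ) : 0 ≤ regInv n x :=
  one_div_nonneg.mpr (add_nonneg (nid_nonneg _) (cutoff_pos n).le)

lemma continuous_one_div_nid_add {ε : ℝ} (hε : 0 < ε) :
    Continuous fun x => 1 / (nid x + ε) :=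
  continuous_const.div (continuous_nid.add continuous_const)
    fun x => (add_pos_of_nonneg_of_pos (nid_nonneg x) hε).ne'

lemma continuous_regInv (n : ℕ) : Continuous (regInv n) :=
  (continuous_one_div_nid_add (cutoff_pos n)).comp (continuous_const.mul continuous_id)

lemma one_div_nid_add_le {ε x : ℝ} (hε : 0 < ε) (hx : x ∈ Set.Icc (0 : ℝ) 1) :
    1 / (nid x + ε) ≤ 1 / (x + ε) + 1 / (1 - x + ε) := by
  obtain ⟨h0, h1⟩ := hx
  have ha : 0 ≤ 1 / (x + ε) := by positivity
  have hb : 0 ≤ 1 / (1 - x + ε) := one_div_nonneg.mpr (by linarith)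
  rcases le_or_gt (round x) 0 with h | h
  · have h' : ((round x : ℤ) : ℝ) ≤ 0 := by exact_mod_cast h
    have : x ≤ nid x := le_trans (by linarith) (le_abs_self _)
    have := one_div_le_one_div_of_le (by linarith : 0 < x + ε) (by linarith : x + ε ≤ nid x + ε)
    linarith
  · have h' : (1 : ℝ) ≤ ((round x : ℤ) : ℝ) := by exact_mod_cast h
    have : 1 - x ≤ nid x := le_trans (by linarith) (neg_le_abs _)
    have := one_div_le_one_div_of_le (by linarith : 0 < 1 - x + ε)
      (by linarith : 1 - x + ε ≤ nid x + ε)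
    linarith

lemma integral_one_div_nid_add_le {ε : ℝ} (hε : 0 < ε) :
    ∫ x in (0 : ℝ)..1, 1 / (nid x + ε) ≤ 2 * Real.log ((1 + ε) / ε) := by
  have h₁ : ∫ x in (0 : ℝ)..1, 1 / (x + ε) = Real.log ((1 + ε) / ε) := by
    rw [intervalIntegral.integral_comp_add_right (fun x => 1 / x) ε,
      integral_one_div_of_pos (by linarith) (by linarith), zero_add]
  have h₂ : ∫ x in (0 : ℝ)..1, 1 / (1 - x + ε) = Real.log ((1 + ε) / ε) := by
    rw [intervalIntegral.integral_comp_sub_left (fun x => 1 / (x + ε)) 1]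
    simpa using h₁
  have i₁ : IntervalIntegrable (fun x : ℝ => 1 / (x + ε)) volume 0 1 := by
    refine ContinuousOn.intervalIntegrable fun x hx => ContinuousAt.continuousWithinAt ?_
    rw [Set.uIcc_of_le zero_le_one] at hx
    have : x + ε ≠ 0 := by linarith [hx.1]
    fun_prop (disch := assumption)
  have i₂ : IntervalIntegrable (fun x : ℝ => 1 / (1 - x + ε)) volume 0 1 := by
    refine ContinuousOn.intervalIntegrable fun x hx => ContinuousAt.continuousWithinAt ?_
    rw [Set.uIcc_of_le zero_le_one] at hx
    have : 1 - x + ε ≠ 0 := by linarith [hx.2]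
    fun_prop (disch := assumption)
  calc ∫ x in (0 : ℝ)..1, 1 / (nid x + ε)
      ≤ ∫ x in (0 : ℝ)..1, (1 / (x + ε) + 1 / (1 - x + ε)) :=
        intervalIntegral.integral_mono_on zero_le_one
          ((continuous_one_div_nid_add hε).intervalIntegrable _ _) (i₁.add i₂)
          fun x hx => one_div_nid_add_le hε hx
    _ = 2 * Real.log ((1 + ε) / ε) := by
        rw [intervalIntegral.integral_add i₁ i₂, h₁, h₂]; ring

lemma log_cutoff_le {n : ℕ} (hn : 1 ≤ n) :
    Real.log ((1 + cutoff n) / cutoff n) ≤ 4 * Real.log (n + 1) := by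
  have hn' : (1 : ℝ) ≤ n := by exact_mod_cast hn
  have h : (1 + cutoff n) / cutoff n = ((n : ℝ) + 1) ^ 3 + 1 := by
    unfold cutoff; field_simp
  have h4 : 4 * Real.log ((n : ℝ) + 1) = Real.log (((n : ℝ) + 1) ^ 4) := by
    rw [Real.log_pow]; norm_num
  rw [h, h4]
  refine Real.log_le_log (by positivity) ?_
  have : (1 : ℝ) ≤ ((n : ℝ) + 1) ^ 3 := one_le_pow₀ (by linarith)
  nlinarith

lemma setIntegral_regInv_le {n : ℕ} (hn : 1 ≤ n) (a : ℤ) :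
    ∫ x in Set.Ioc (a : ℝ) (a + 1), regInv n x ≤ 8 * Real.log (n + 1) := by
  have hn0 : (n : ℝ) ≠ 0 := by positivity
  have hper : Function.Periodic (fun x => 1 / (nid x + cutoff n)) 1 := fun x => by
    simp only [periodic_nid x]
  have hc := continuous_one_div_nid_add (cutoff_pos n)
  rw [← intervalIntegral.integral_of_le (by linarith)]
  unfold regInv
  rw [intervalIntegral.integral_comp_mul_left (fun x => 1 / (nid x + cutoff n)) hn0]
  have he : (n : ℝ) * (a + 1) = n * a + (n : ℤ) • (1 : ℝ) := by simp; ring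
  rw [he, hper.intervalIntegral_add_zsmul_eq n _ fun _ _ => hc.intervalIntegrable _ _,
    hper.intervalIntegral_add_eq _ 0, zero_add]
  have := integral_one_div_nid_add_le (cutoff_pos n)
  have := log_cutoff_le hn
  simp only [smul_eq_mul, zsmul_eq_mul, Int.cast_natCast, inv_mul_cancel_left₀ hn0]
  linarith

/-- Lebesgue measure on the unit cube with corner `a`. -/
def cubeMeasure {d : ℕ} (a : Fin d → ℤ) : Measure (Fin d → ℝ) :=
  Measure.pi fun i => volume.restrict (Set.Ioc (a i : ℝ) (a i + 1))

lemma ae_of_forall_ae_cubeMeasure {d : ℕ} {p : (Fin d → ℝ) → Prop}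
    (h : ∀ a : Fin d → ℤ, ∀ᵐ x ∂cubeMeasure a, p x) : ∀ᵐ x : Fin d → ℝ, p x := by
  have hU : (⋃ a : Fin d → ℤ, Set.univ.pi fun i => Set.Ioc (a i : ℝ) (a i + 1)) = Set.univ := by
    refine Set.eq_univ_of_forall fun x => Set.mem_iUnion.mpr ⟨fun i => ⌈x i⌉ - 1, fun i _ => ?_⟩
    have := Int.ceil_lt_add_one (x i)
    have := Int.le_ceil (x i)
    constructor <;> push_cast <;> linarith
  rw [← Measure.restrict_univ (μ := (volume : Measure (Fin d → ℝ))), ← hU,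
    ae_restrict_iUnion_iff]
  intro a
  rw [volume_pi, Measure.restrict_pi_pi]
  exact h a

lemma integrable_regInv_restrict (n : ℕ) (a : ℤ) :
    Integrable (regInv n) (volume.restrict (Set.Ioc (a : ℝ) (a + 1))) :=
  ((continuous_regInv n).integrableOn_Icc (a := (a : ℝ)) (b := a + 1)).mono_set
    Set.Ioc_subset_Icc_self

section Product

variable {d : ℕ}

lemma prod_eq_prod_univ_ite (s : Finset (Fin d)) (n : ℕ) (x : Fin d → ℝ) :
    ∏ i ∈ s, regInv n (x i) = ∏ i, (if i ∈ s then regInv n else fun _ => 1) (x i) := by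
  rw [← Finset.prod_filter_mul_prod_filter_not Finset.univ (· ∈ s)]
  rw [Finset.prod_congr rfl (g := fun i => regInv n (x i)) (s₁ := Finset.univ.filter (· ∈ s))
    (fun i hi => by simp [(Finset.mem_filter.mp hi).2])]
  rw [Finset.prod_eq_one (s := Finset.univ.filter (· ∉ s))
    (fun i hi => by simp [(Finset.mem_filter.mp hi).2])]
  simp

lemma integrable_prod_regInv (a : Fin d → ℤ) (s : Finset (Fin d)) (n : ℕ) :
    Integrable (fun x => ∏ i ∈ s, regInv n (x i)) (cubeMeasure a) := by
  simp_rw [prod_eq_prod_univ_ite]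
  refine Integrable.fintype_prod_dep fun i => ?_
  split_ifs
  · exact integrable_regInv_restrict n (a i)
  · exact integrable_const _

lemma integral_prod_regInv_le (a : Fin d → ℤ) (s : Finset (Fin d)) {n : ℕ} (hn : 1 ≤ n) :
    ∫ x, ∏ i ∈ s, regInv n (x i) ∂cubeMeasure a ≤ (8 * Real.log (n + 1)) ^ #s := by
  simp_rw [prod_eq_prod_univ_ite, cubeMeasure]
  rw [integral_fintype_prod_eq_prod]
  calc _ ≤ ∏ i : Fin d, if i ∈ s then 8 * Real.log (n + 1) else 1 := by
        refine Finset.prod_le_prod (fun i _ => integral_nonneg fun x => ?_) fun i _ => ?_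
        · split_ifs
          · exact regInv_nonneg n x
          · exact zero_le_one
        · split_ifs
          · exact setIntegral_regInv_le hn (a i)
          · simp
    _ = _ := by simp

end Product

lemma ae_summable_of_integral_le {X : Type*} [MeasurableSpace X] {μ : Measure X}
    {f : ℕ → X → ℝ} {b : ℕ → ℝ} (hf : ∀ t x, 0 ≤ f t x) (hi : ∀ t, Integrable (f t) μ)
    (hb : ∀ t, ∫ x, f t x ∂μ ≤ b t) (hs : Summable b) :
    ∀ᵐ x ∂μ, Summable fun t => f t x := by
  have hm : ∀ t, AEMeasurable (fun x => ENNReal.ofReal (f t x)) μ :=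
    fun t => (hi t).aemeasurable.ennreal_ofReal
  have hfin : ∫⁻ x, ∑' t, ENNReal.ofReal (f t x) ∂μ ≠ ⊤ := by
    rw [lintegral_tsum hm]
    refine ne_top_of_le_ne_top hs.tsum_ofReal_ne_top (ENNReal.tsum_le_tsum fun t => ?_)
    rw [← ofReal_integral_eq_lintegral_ofReal (hi t) (Filter.Eventually.of_forall (hf t))]
    exact ENNReal.ofReal_le_ofReal (hb t)
  filter_upwards [ae_lt_top' (AEMeasurable.tsum hm) hfin] with x hx
  simpa [ENNReal.toReal_ofReal (hf _ x)] using ENNReal.summable_toReal hx.ne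

lemma summable_cutoff_mul_log :
    Summable fun n : ℕ => cutoff (n + 1) * (8 * Real.log ((n + 1 : ℕ) + 1)) := by
  have h := ((summable_nat_add_iff 2).mpr
    (Real.summable_one_div_nat_pow.mpr (one_lt_two))).mul_left 8
  refine Summable.of_nonneg_of_le (fun n => ?_) (fun n => ?_) h
  · exact mul_nonneg (cutoff_pos _).le
      (mul_nonneg (by norm_num) (Real.log_nonneg (by push_cast; linarith [n.cast_nonneg (α := ℝ)])))
  · have hx : (0 : ℝ) < (n + 1 : ℕ) + 1 := by positivity
    have hl := Real.log_le_sub_one_of_pos hx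
    calc cutoff (n + 1) * (8 * Real.log ((n + 1 : ℕ) + 1))
        ≤ cutoff (n + 1) * (8 * ((n + 1 : ℕ) + 1)) := by
          refine mul_le_mul_of_nonneg_left ?_ (cutoff_pos _).le
          linarith
      _ = 8 * (1 / ((n + 2 : ℕ) : ℝ) ^ 2) := by
          unfold cutoff; push_cast; field_simp; ring

lemma ae_eventually_cutoff_le_nid {d : ℕ} (a : Fin d → ℤ) :
    ∀ᵐ x ∂cubeMeasure a, ∀ᶠ n : ℕ in Filter.atTop, ∀ i, cutoff n ≤ nid (n * x i) := by
  have key : ∀ i : Fin d, ∀ᵐ x ∂cubeMeasure a,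
      Summable fun n : ℕ => cutoff (n + 1) * ∏ k ∈ {i}, regInv (n + 1) (x k) := fun i => by
    refine ae_summable_of_integral_le (fun n x => ?_) (fun n => ?_) (fun n => ?_)
      summable_cutoff_mul_log
    · exact mul_nonneg (cutoff_pos _).le (Finset.prod_nonneg fun k _ => regInv_nonneg _ _)
    · exact (integrable_prod_regInv a {i} (n + 1)).const_mul _
    · rw [integral_const_mul]
      refine mul_le_mul_of_nonneg_left ?_ (cutoff_pos _).le
      simpa using integral_prod_regInv_le a {i} (Nat.le_add_left 1 n)
  filter_upwards [ae_all_iff.mpr key] with x hx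
  refine Filter.eventually_all.mpr fun i => ?_
  rw [← Filter.map_add_atTop_eq_nat 1, Filter.eventually_map]
  filter_upwards [(hx i).tendsto_atTop_zero.eventually_lt_const (by norm_num : (0 : ℝ) < 1 / 2)]
    with n hn
  have h0 := cutoff_pos (n + 1)
  have h1 := nid_nonneg ((n + 1 : ℕ) * x i)
  rw [Finset.prod_singleton, regInv, mul_one_div, div_lt_iff₀ (by linarith)] at hn
  linarith

/-- The regularized sum over `n ≤ M`. -/
def regSum {d : ℕ} (s : Finset (Fin d)) (M : ℕ) (x : Fin d → ℝ) : ℝ :=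
  ∑ n ∈ Finset.Icc 1 M, 1 / (n : ℝ) * ∏ i ∈ s, regInv n (x i)

/-- The doubly exponential range of summation `⌊exp (4 exp t)⌋`. -/
def scale (t : ℕ) : ℕ := ⌊Real.exp (4 * Real.exp t)⌋₊

section Sums

variable {d : ℕ} (s : Finset (Fin d))

lemma regSum_term_nonneg (n : ℕ) (x : Fin d → ℝ) :
    0 ≤ 1 / (n : ℝ) * ∏ i ∈ s, regInv n (x i) :=
  mul_nonneg (by positivity) (Finset.prod_nonneg fun i _ => regInv_nonneg _ _)

lemma regSum_nonneg (M : ℕ) (x : Fin d → ℝ) : 0 ≤ regSum s M x :=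
  Finset.sum_nonneg fun n _ => regSum_term_nonneg s n x

lemma regSum_mono (x : Fin d → ℝ) : Monotone fun M => regSum s M x := fun _ _ h =>
  Finset.sum_le_sum_of_subset_of_nonneg (Finset.Icc_subset_Icc_right h)
    fun n _ _ => regSum_term_nonneg s n x

lemma integrable_regSum (a : Fin d → ℤ) (M : ℕ) : Integrable (regSum s M) (cubeMeasure a) :=
  integrable_finsetSum _ fun n _ => (integrable_prod_regInv a s n).const_mul _

lemma integral_regSum_le (a : Fin d → ℤ) (M : ℕ) :
    ∫ x, regSum s M x ∂cubeMeasure a ≤ (1 + Real.log M) * (8 * Real.log (M + 1)) ^ #s := by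
  unfold regSum
  rw [integral_finsetSum _ fun n _ => (integrable_prod_regInv a s n).const_mul _]
  calc _ ≤ ∑ n ∈ Finset.Icc 1 M, 1 / (n : ℝ) * (8 * Real.log (M + 1)) ^ #s := by
        refine Finset.sum_le_sum fun n hn => ?_
        obtain ⟨h1, hM⟩ := Finset.mem_Icc.mp hn
        rw [integral_const_mul]
        refine mul_le_mul_of_nonneg_left ?_ (by positivity)
        refine (integral_prod_regInv_le a s h1).trans ?_
        have : 0 ≤ Real.log ((n : ℝ) + 1) := Real.log_nonneg (by linarith [n.cast_nonneg (α := ℝ)])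
        gcongr
    _ = (harmonic M : ℝ) * (8 * Real.log (M + 1)) ^ #s := by
        rw [← Finset.sum_mul, harmonic_eq_sum_Icc]
        simp
    _ ≤ _ := by
        refine mul_le_mul_of_nonneg_right (harmonic_le_one_add_log M) ?_
        have : 0 ≤ Real.log ((M : ℝ) + 1) := Real.log_nonneg (by linarith [M.cast_nonneg (α := ℝ)])
        positivity

lemma log_scale_add_one_le (t : ℕ) : Real.log (scale t + 1) ≤ 5 * Real.exp t := by
  have h1 : (1 : ℝ) ≤ Real.exp t := Real.one_le_exp (by positivity)
  have h2 : (scale t : ℝ) ≤ Real.exp (4 * Real.exp t) := Nat.floor_le (Real.exp_pos _).le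
  have h3 : (1 : ℝ) ≤ Real.exp (4 * Real.exp t) := Real.one_le_exp (by positivity)
  rw [Real.log_le_iff_le_exp (by positivity)]
  calc (scale t : ℝ) + 1 ≤ 2 * Real.exp (4 * Real.exp t) := by linarith
    _ ≤ Real.exp (Real.exp t) * Real.exp (4 * Real.exp t) := by
        gcongr
        linarith [Real.add_one_le_exp (Real.exp t)]
    _ = Real.exp (5 * Real.exp t) := by rw [← Real.exp_add]; ring_nf

lemma integral_regSum_scale_le (a : Fin d → ℤ) (t : ℕ) :
    ∫ x, regSum s (scale t) x ∂cubeMeasure a ≤ 6 * 40 ^ #s * Real.exp t ^ (#s + 1) := by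
  have h1 : (1 : ℝ) ≤ Real.exp t := Real.one_le_exp (by positivity)
  have hM : (0 : ℝ) ≤ scale t := Nat.cast_nonneg _
  have hl := log_scale_add_one_le t
  have hl0 : 0 ≤ Real.log ((scale t : ℝ) + 1) := Real.log_nonneg (by linarith)
  have hl' : Real.log (scale t) ≤ Real.log ((scale t : ℝ) + 1) := by
    rcases hM.eq_or_lt with h | h
    · simp [← h]
    · exact Real.log_le_log h (by linarith)
  calc _ ≤ _ := integral_regSum_le s a (scale t)
    _ ≤ (6 * Real.exp t) * (40 * Real.exp t) ^ #s := by
        refine mul_le_mul (by linarith) ?_ (by positivity) (by positivity)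
        exact pow_le_pow_left₀ (by positivity) (by linarith) _
    _ = _ := by rw [mul_pow]; ring

lemma ae_exists_regSum_scale_le (a : Fin d → ℤ) {φ : ℕ → ℝ} (hφpos : ∀ n, 0 < φ n)
    (hφsum : Summable fun n => 1 / φ n) :
    ∀ᵐ x ∂cubeMeasure a, ∃ B : ℝ, 0 ≤ B ∧
      ∀ t, regSum s (scale t) x ≤ B * (Real.exp t ^ (#s + 1) * φ t) := by
  have hpos : ∀ t : ℕ, 0 < Real.exp t ^ (#s + 1) * φ t := fun t => mul_pos (by positivity) (hφpos t)
  have key : ∀ᵐ x ∂cubeMeasure a,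
      Summable fun t : ℕ => (Real.exp t ^ (#s + 1) * φ t)⁻¹ * regSum s (scale t) x := by
    refine ae_summable_of_integral_le (fun t x => ?_) (fun t => ?_) (fun t => ?_)
      (hφsum.mul_left (6 * 40 ^ #s))
    · exact mul_nonneg (inv_nonneg.mpr (hpos t).le) (regSum_nonneg s _ x)
    · exact (integrable_regSum s a _).const_mul _
    · rw [integral_const_mul, inv_mul_le_iff₀ (hpos t)]
      refine (integral_regSum_scale_le s a t).trans_eq ?_
      have := (hφpos t).ne'
      field_simp
  filter_upwards [key] with x hx
  have h0 : ∀ t : ℕ, 0 ≤ (Real.exp t ^ (#s + 1) * φ t)⁻¹ * regSum s (scale t) x := fun t =>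
    mul_nonneg (inv_nonneg.mpr (hpos t).le) (regSum_nonneg s _ x)
  refine ⟨_, tsum_nonneg (L := .unconditional ℕ) h0, fun t => ?_⟩
  have := hx.le_tsum t fun t' _ => h0 t'
  rwa [inv_mul_le_iff₀ (hpos t), mul_comm] at this

lemma one_div_mul_prod_le {x : Fin d → ℝ} {n : ℕ} (h : ∀ i, cutoff n ≤ nid (n * x i)) :
    1 / ((n : ℝ) * ∏ i ∈ s, nid ((n : ℝ) * x i)) ≤
      2 ^ #s * (1 / (n : ℝ) * ∏ i ∈ s, regInv n (x i)) := by
  have hle : ∏ i ∈ s, 1 / nid ((n : ℝ) * x i) ≤ ∏ i ∈ s, 2 * regInv n (x i) := by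
    refine Finset.prod_le_prod (fun i _ => one_div_nonneg.mpr (nid_nonneg _)) fun i _ => ?_
    have h0 := cutoff_pos n
    have h1 := h i
    rw [regInv, mul_one_div, div_le_div_iff₀ (by linarith) (by linarith)]
    linarith
  rw [Finset.prod_mul_distrib, Finset.prod_const, Finset.prod_div_distrib,
    Finset.prod_const_one] at hle
  calc _ = 1 / (n : ℝ) * (1 / ∏ i ∈ s, nid ((n : ℝ) * x i)) := (one_div_mul_one_div _ _).symm
    _ ≤ 1 / (n : ℝ) * (2 ^ #s * ∏ i ∈ s, regInv n (x i)) := by gcongr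
    _ = _ := by ring

lemma exists_sum_le_add_regSum {x : Fin d → ℝ}
    (h : ∀ᶠ n : ℕ in Filter.atTop, ∀ i, cutoff n ≤ nid (n * x i)) :
    ∃ D : ℝ, 0 ≤ D ∧ ∀ M : ℕ,
      ∑ n ∈ Finset.Icc 1 M, 1 / ((n : ℝ) * ∏ i ∈ s, nid ((n : ℝ) * x i)) ≤
        D + 2 ^ #s * regSum s M x := by
  obtain ⟨n₀, hn₀⟩ := Filter.eventually_atTop.mp h
  set g : ℕ → ℝ := fun n => 1 / ((n : ℝ) * ∏ i ∈ s, nid ((n : ℝ) * x i))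
  have hg0 : ∀ n, 0 ≤ g n := fun n => one_div_nonneg.mpr
    (mul_nonneg n.cast_nonneg (Finset.prod_nonneg fun i _ => nid_nonneg _))
  have hr0 : ∀ n : ℕ, 0 ≤ 2 ^ #s * (1 / (n : ℝ) * ∏ i ∈ s, regInv n (x i)) := fun n =>
    mul_nonneg (by positivity) (regSum_term_nonneg s n x)
  refine ⟨∑ n ∈ Finset.range n₀, g n, Finset.sum_nonneg fun n _ => hg0 n, fun M => ?_⟩
  rw [← Finset.sum_filter_add_sum_filter_not (Finset.Icc 1 M) (· < n₀), regSum, Finset.mul_sum]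
  refine add_le_add ?_ ?_
  · refine Finset.sum_le_sum_of_subset_of_nonneg (fun n hn => ?_) fun n _ _ => hg0 n
    exact Finset.mem_range.mpr (Finset.mem_filter.mp hn).2
  · refine (Finset.sum_le_sum fun n hn => one_div_mul_prod_le s (hn₀ n ?_)).trans
      (Finset.sum_le_sum_of_subset_of_nonneg (Finset.filter_subset _ _) fun n _ _ => hr0 n)
    exact not_lt.mp (Finset.mem_filter.mp hn).2

end Sums

lemma one_le_log_natCast {N : ℕ} (hN : 3 ≤ N) : 1 ≤ Real.log N := by
  have hN' : (3 : ℝ) ≤ N := by exact_mod_cast hN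
  rw [Real.le_log_iff_exp_le (by linarith)]
  linarith [Real.exp_one_lt_three]

lemma floor_le_scale {N : ℕ} (hN : 3 ≤ N) :
    ⌊(N : ℝ) ^ 2 * Real.log N ^ 2⌋₊ ≤ scale ⌈Real.log (Real.log N)⌉₊ := by
  have hN' : (0 : ℝ) < N := by positivity
  have hL := one_le_log_natCast hN
  refine Nat.floor_le_floor ?_
  calc (N : ℝ) ^ 2 * Real.log N ^ 2 ≤ (N : ℝ) ^ 2 * (N : ℝ) ^ 2 := by
        have := Real.log_le_self hN'.le
        gcongr
    _ = Real.exp (4 * Real.log N) := by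
        rw [mul_comm 4, Real.exp_mul, Real.exp_log hN']; norm_cast; ring
    _ ≤ _ := by
        gcongr
        calc Real.log N = Real.exp (Real.log (Real.log N)) := (Real.exp_log (by linarith)).symm
          _ ≤ _ := Real.exp_le_exp.mpr (Nat.le_ceil _)

lemma exp_ceil_log_log_le {N : ℕ} (hN : 3 ≤ N) :
    Real.exp (⌈Real.log (Real.log N)⌉₊ : ℝ) ≤ Real.exp 1 * Real.log N := by
  have hL := one_le_log_natCast hN
  calc _ ≤ Real.exp (1 + Real.log (Real.log N)) :=
        Real.exp_le_exp.mpr (by linarith [Nat.ceil_lt_add_one (Real.log_nonneg hL)])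
    _ = _ := by rw [Real.exp_add, Real.exp_log (by linarith)]

/-- For a.e. `α ∈ ℝ^d` and every `1 ≤ j ≤ d` there is `C(α,φ,j)` with
`∑_{n=1}^{⌊N²(log N)²⌋} 1/(n·∏_{i≠j}‖nα_i‖) ≤ C·(log N)^d·φ(log log N)^d` for `N ≥ 3`. -/
theorem stmt_9 (d : ℕ) (hd : 1 ≤ d) (φ : ℕ → ℝ) (hφpos : ∀ n, 0 < φ n)
    (hφmono : Monotone φ) (hφsum : Summable fun n => 1 / φ n) :
    ∀ᵐ α ∂(volume : Measure (Fin d → ℝ)),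
      ∀ j : Fin d, ∃ C : ℝ, ∀ N : ℕ, 3 ≤ N →
        ∑ n ∈ Finset.Icc 1 (Nat.floor ((N : ℝ) ^ 2 * Real.log N ^ 2)),
            1 / ((n : ℝ) * ∏ i ∈ Finset.univ.erase j, nid ((n : ℝ) * α i)) ≤
          C * Real.log N ^ d * φ (Nat.ceil (Real.log (Real.log N))) ^ d := by
  have hφ0 := hφpos 0
  refine ae_of_forall_ae_cubeMeasure fun a => ae_all_iff.mpr fun j => ?_
  set s : Finset (Fin d) := Finset.univ.erase j with hs
  have hcard : #s + 1 = d := by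
    rw [hs, Finset.card_erase_add_one (Finset.mem_univ j), Finset.card_univ, Fintype.card_fin]
  filter_upwards [ae_eventually_cutoff_le_nid a, ae_exists_regSum_scale_le s a hφpos hφsum]
    with α hα ⟨B, hB0, hB⟩
  obtain ⟨D, hD0, hD⟩ := exists_sum_le_add_regSum s hα
  refine ⟨D / φ 0 ^ d + 2 ^ #s * B * Real.exp 1 ^ d / φ 0 ^ #s, fun N hN => ?_⟩
  have hL := one_le_log_natCast hN
  set t := ⌈Real.log (Real.log N)⌉₊
  set L := Real.log N
  have hφt : φ 0 ≤ φ t := hφmono (Nat.zero_le t)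
  have hsmall : D ≤ D / φ 0 ^ d * L ^ d * φ t ^ d := by
    have h1 : (1 : ℝ) ≤ L ^ d := one_le_pow₀ hL
    have h2 : φ 0 ^ d ≤ φ t ^ d := pow_le_pow_left₀ hφ0.le hφt d
    calc D = D / φ 0 ^ d * 1 * φ 0 ^ d := by field_simp
      _ ≤ _ := by gcongr
  have hmain : regSum s (scale t) α ≤ B * Real.exp 1 ^ d / φ 0 ^ #s * L ^ d * φ t ^ d := by
    have h2 : φ 0 ^ #s ≤ φ t ^ #s := pow_le_pow_left₀ hφ0.le hφt _
    have h3 : Real.exp t ^ d ≤ (Real.exp 1 * L) ^ d :=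
      pow_le_pow_left₀ (Real.exp_pos _).le (exp_ceil_log_log_le hN) d
    have h4 := hφpos t
    calc _ ≤ B * (Real.exp t ^ d * φ t) := by simpa only [hcard] using hB t
      _ ≤ B * ((Real.exp 1 * L) ^ d * φ t) := by gcongr
      _ = B * Real.exp 1 ^ d / φ 0 ^ #s * L ^ d * (φ 0 ^ #s * φ t) := by
          rw [mul_pow]; field_simp
      _ ≤ B * Real.exp 1 ^ d / φ 0 ^ #s * L ^ d * (φ t ^ #s * φ t) := by gcongr
      _ = _ := by rw [← pow_succ, hcard]
  calc _ ≤ D + 2 ^ #s * regSum s ⌊(N : ℝ) ^ 2 * L ^ 2⌋₊ α := hD _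
    _ ≤ D + 2 ^ #s * regSum s (scale t) α := by
        gcongr
        exact regSum_mono s α (floor_le_scale hN)
    _ ≤ D / φ 0 ^ d * L ^ d * φ t ^ d +
          2 ^ #s * (B * Real.exp 1 ^ d / φ 0 ^ #s * L ^ d * φ t ^ d) := by gcongr
    _ = _ := by ring
end
end

section
/- Let d ≥ 1, let s ∈ ℕ be fixed, and let φ : ℕ → (0,∞) be a positive increasing function with ∑_{n=1}^∞ 1/φ(n) < ∞. For Lebesgue-almost every α = (α₁,…,α_d) ∈ [0,1]^d there is a constant C(α,φ,s) such that for all N ≥ 3, the sum of 1/( n·∏_{i=1}^d ‖nα_i‖ ) over all integers 1 ≤ n ≤ N²(log N)² satisfying n·∏_{i=1}^d ‖nα_i‖ < (log N)^s is at most C(α,φ,s)·(log N)^d·φ(log log N)^{d+1}. -/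
open MeasureTheory Finset

noncomputable section

lemma sum_one_div_Icc_le {m L : ℕ} (hm : 1 ≤ m) (hL : m ≤ L) :
    ∑ n ∈ Icc m L, 1 / (n : ℝ) ≤ 1 + Real.log (L / m) := by
  induction L, hL using Nat.le_induction with
  | base =>
    have : (1 : ℝ) ≤ m := by exact_mod_cast hm
    rw [Icc_self, sum_singleton, div_self (by positivity), Real.log_one, add_zero]
    exact (div_le_one (by positivity)).2 this
  | succ L hL ih =>
    have hm' : (0 : ℝ) < m := by exact_mod_cast hm
    have hL' : (0 : ℝ) < L := by exact_mod_cast (by omega : 0 < L)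
    rw [Finset.sum_Icc_succ_top (by omega)]
    have h := Real.log_le_sub_one_of_pos (x := (L : ℝ) / (L + 1)) (by positivity)
    have h1 : (L : ℝ) / (L + 1) - 1 = -(1 / (L + 1)) := by field_simp; ring
    rw [Real.log_div (by positivity) (by positivity)] at ih h ⊢
    push_cast
    linarith

/-- Summing over `n` the part of `1 / (n y)` with `n y` in a fixed window gains only the
logarithmic length of the window. -/
lemma sum_window_le {y δ T : ℝ} (hy : 0 ≤ y) (hδ : 0 < δ) (hT : δ ≤ T) {M : ℕ} (hM : 1 ≤ M) :
    ∑ n ∈ Icc 1 M, (if δ ≤ n * y ∧ n * y < T then 1 / (n * y) else 0)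
      ≤ (1 + Real.log (T / δ)) * (1 / max y (δ / M)) := by
  have hM' : (0 : ℝ) < M := by exact_mod_cast hM
  have hlog : 0 ≤ Real.log (T / δ) := Real.log_nonneg ((one_le_div hδ).2 hT)
  rw [← sum_filter]
  set S := (Icc 1 M).filter fun n : ℕ => δ ≤ n * y ∧ n * y < T
  rcases S.eq_empty_or_nonempty with h | h
  · rw [h, sum_empty]
    positivity
  have hmin := mem_filter.1 (S.min'_mem h)
  have hmax := mem_filter.1 (S.max'_mem h)
  have hle := S.min'_le _ (S.max'_mem h)
  set m := S.min' h
  set L := S.max' h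
  have hm1 : 1 ≤ m := (mem_Icc.1 hmin.1).1
  have hm : (0 : ℝ) < m := by exact_mod_cast hm1
  have hy' : 0 < y := by
    rcases hy.eq_or_lt with h0 | h0
    · have := hmin.2.1
      rw [← h0, mul_zero] at this
      linarith
    · exact h0
  have hmM : (m : ℝ) ≤ M := by exact_mod_cast (mem_Icc.1 hmin.1).2
  have hya : δ / M ≤ y := by
    rw [div_le_iff₀ hM']
    nlinarith [hmin.2.1]
  have hsub : S ⊆ Icc m L := fun n hn => mem_Icc.2 ⟨S.min'_le _ hn, S.le_max' _ hn⟩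
  have hLm : (L : ℝ) / m ≤ T / δ := by
    rw [div_le_div_iff₀ hm hδ]
    have h1 := hmin.2.1
    have h2 := hmax.2.2
    have hL0 : (0 : ℝ) ≤ L := Nat.cast_nonneg _
    refine le_of_mul_le_mul_right ?_ hy'
    nlinarith
  have hL : (0 : ℝ) < L := by exact_mod_cast (by omega : 0 < L)
  rw [max_eq_left hya]
  calc ∑ n ∈ S, 1 / ((n : ℝ) * y) = (∑ n ∈ S, 1 / (n : ℝ)) * (1 / y) := by
        rw [sum_mul]
        exact sum_congr rfl fun n _ => by rw [one_div_mul_one_div]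
    _ ≤ (∑ n ∈ Icc m L, 1 / (n : ℝ)) * (1 / y) := by
        gcongr
    _ ≤ (1 + Real.log (T / δ)) * (1 / y) := by
        gcongr
        exact (sum_one_div_Icc_le hm1 hle).trans
          (by gcongr)

lemma sum_below_le {y δ : ℝ} (hy : 0 ≤ y) (hδ : 0 < δ) {M : ℕ} (hM : 1 ≤ M) :
    ∑ n ∈ Icc 1 M, (if n * y < δ then (1 : ℝ) else 0) ≤ δ * (1 / max y (δ / M)) := by
  have hM' : (0 : ℝ) < M := by exact_mod_cast hM
  rw [mul_one_div, le_div_iff₀ (lt_max_of_lt_right (by positivity)), ← sum_filter, sum_const,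
    nsmul_eq_mul, mul_one]
  set S := (Icc 1 M).filter fun n : ℕ => n * y < δ
  rcases le_total y (δ / M) with h | h
  · rw [max_eq_right h]
    have : (#S : ℝ) ≤ M := by
      exact_mod_cast (card_filter_le _ _).trans (by simp)
    calc (#S : ℝ) * (δ / M) ≤ M * (δ / M) := by gcongr
      _ = δ := by field_simp
  · rw [max_eq_left h]
    rcases S.eq_empty_or_nonempty with h0 | h0
    · simp [h0, hδ.le]
    have hmax := mem_filter.1 (S.max'_mem h0)
    have hsub : S ⊆ Icc 1 (S.max' h0) := fun n hn =>
      mem_Icc.2 ⟨(mem_Icc.1 (mem_filter.1 hn).1).1, S.le_max' _ hn⟩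
    have hc : (#S : ℝ) ≤ (S.max' h0 : ℕ) := by
      exact_mod_cast (card_le_card hsub).trans (by simp)
    exact (mul_le_mul_of_nonneg_right hc hy).trans hmax.2.le

/-- Truncating a product of numbers `≤ 1` from below dominates truncating each factor. -/
lemma one_div_max_prod_le {ι : Type*} [Fintype ι] {u : ι → ℝ} (h1 : ∀ i, u i ≤ 1)
    {a : ℝ} (ha : 0 < a) (ha1 : a ≤ 1) :
    1 / max (∏ i, u i) a ≤ ∏ i, 1 / max (u i) a := by
  rw [prod_div_distrib, prod_const_one]
  have hpos : ∀ i, 0 < max (u i) a := fun i => lt_max_of_lt_right ha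
  refine one_div_le_one_div_of_le (prod_pos fun i _ => hpos i) ?_
  by_cases h : ∀ i, a ≤ u i
  · exact le_max_of_le_left (prod_le_prod (fun i _ => (hpos i).le) fun i _ => (max_eq_left (h i)).le)
  · push Not at h
    obtain ⟨j, hj⟩ := h
    classical
    refine le_max_of_le_right ?_
    rw [← mul_prod_erase _ _ (mem_univ j), max_eq_right hj.le]
    exact mul_le_of_le_one_right ha.le
      (prod_le_one (fun i _ => (hpos i).le) fun i _ => max_le (h1 i) ha1)

lemma integral_one_div_max_norm_le {a : ℝ} (ha : 0 < a) :
    ∫ x : UnitAddCircle, 1 / max ‖x‖ a ≤ 4 * Real.log (1 + 1 / a) := by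
  rw [← UnitAddCircle.intervalIntegral_preimage 0, zero_add]
  have hbound : ∀ x ∈ Set.Icc (0 : ℝ) 1,
      1 / max ‖(x : UnitAddCircle)‖ a ≤ 2 * (x + a)⁻¹ + 2 * (1 + a - x)⁻¹ := by
    rintro x ⟨hx0, hx1⟩
    rw [UnitAddCircle.norm_eq]
    have hp : 0 < max |x - round x| a := lt_max_of_lt_right ha
    have hl := le_max_left |x - round x| a
    have hr := le_max_right |x - round x| a
    have key : ∀ z : ℝ, 0 ≤ z → z ≤ |x - round x| → 1 / max |x - round x| a ≤ 2 * (z + a)⁻¹ := by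
      intro z hz hzx
      rw [← div_eq_mul_inv, div_le_div_iff₀ hp (by linarith)]
      linarith
    have p1 : 0 ≤ 2 * (x + a)⁻¹ := by positivity
    have p2 : 0 ≤ 2 * (1 + a - x)⁻¹ := by
      have : 0 < 1 + a - x := by linarith
      positivity
    rcases le_or_gt (round x) 0 with h | h
    · have h' : (round x : ℝ) ≤ 0 := by exact_mod_cast h
      have := key x hx0 ((by linarith : x ≤ x - round x).trans (le_abs_self _))
      linarith
    · have h' : (1 : ℝ) ≤ round x := by exact_mod_cast h
      have := key (1 - x) (by linarith)
        ((by linarith : 1 - x ≤ -(x - round x)).trans (neg_le_abs _))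
      rw [show 1 - x + a = 1 + a - x by ring] at this
      linarith
  have hc1 : IntervalIntegrable (fun x : ℝ => 2 * (x + a)⁻¹) volume 0 1 := by
    refine ContinuousOn.intervalIntegrable_of_Icc zero_le_one ?_
    refine continuousOn_const.mul (ContinuousOn.inv₀ (by fun_prop) ?_)
    rintro x ⟨h, _⟩
    linarith
  have hc2 : IntervalIntegrable (fun x : ℝ => 2 * (1 + a - x)⁻¹) volume 0 1 := by
    refine ContinuousOn.intervalIntegrable_of_Icc zero_le_one ?_
    refine continuousOn_const.mul (ContinuousOn.inv₀ (by fun_prop) ?_)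
    rintro x ⟨_, h⟩
    linarith
  have hc : Continuous fun x : ℝ => 1 / max ‖(x : UnitAddCircle)‖ a := by
    refine continuous_const.div ?_ fun x => (lt_max_of_lt_right ha).ne'
    exact ((AddCircle.continuous_mk' 1).norm).max continuous_const
  have hlog : Real.log ((1 + a) / a) = Real.log (1 + 1 / a) := by
    congr 1; field_simp; ring
  calc ∫ x in (0 : ℝ)..1, 1 / max ‖(x : UnitAddCircle)‖ a
      ≤ ∫ x in (0 : ℝ)..1, (2 * (x + a)⁻¹ + 2 * (1 + a - x)⁻¹) :=
        intervalIntegral.integral_mono_on zero_le_one (hc.intervalIntegrable _ _) (hc1.add hc2)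
          hbound
    _ = 4 * Real.log (1 + 1 / a) := by
        rw [intervalIntegral.integral_add hc1 hc2, intervalIntegral.integral_const_mul,
          intervalIntegral.integral_const_mul,
          intervalIntegral.integral_comp_add_right (fun x : ℝ => x⁻¹),
          intervalIntegral.integral_comp_sub_left (fun x : ℝ => x⁻¹), zero_add,
          show 1 + a - 1 = a by ring, sub_zero,
          integral_inv_of_pos ha (by linarith), hlog]
        ring

/-- The product of the distances of the coordinates to `0`. -/
def prodNorm {d : ℕ} (β : Fin d → UnitAddCircle) : ℝ := ∏ i, ‖β i‖

lemma prodNorm_nonneg {d : ℕ} (β : Fin d → UnitAddCircle) : 0 ≤ prodNorm β :=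
  prod_nonneg fun _ _ => norm_nonneg _

lemma continuous_prodNorm {d : ℕ} : Continuous (prodNorm (d := d)) := by
  unfold prodNorm
  fun_prop

lemma lintegral_one_div_max_prodNorm_le (d : ℕ) {a : ℝ} (ha : 0 < a) (ha1 : a ≤ 1) :
    ∫⁻ β : Fin d → UnitAddCircle, ENNReal.ofReal (1 / max (prodNorm β) a)
      ≤ ENNReal.ofReal ((4 * Real.log (1 + 1 / a)) ^ d) := by
  have hc : Continuous fun x : UnitAddCircle => 1 / max ‖x‖ a :=
    continuous_const.div (continuous_norm.max continuous_const)
      fun x => (lt_max_of_lt_right ha).ne'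
  have hcp : Continuous fun β : Fin d → UnitAddCircle => ∏ i, 1 / max ‖β i‖ a :=
    continuous_finsetProd _ fun i _ => hc.comp (continuous_apply i)
  have hpos : ∀ x : UnitAddCircle, 0 ≤ 1 / max ‖x‖ a := fun x => by
    have := lt_max_of_lt_right (b := ‖x‖) ha
    positivity
  calc ∫⁻ β : Fin d → UnitAddCircle, ENNReal.ofReal (1 / max (prodNorm β) a)
      ≤ ∫⁻ β : Fin d → UnitAddCircle, ENNReal.ofReal (∏ i, 1 / max ‖β i‖ a) := by
        refine lintegral_mono fun β => ENNReal.ofReal_le_ofReal ?_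
        refine one_div_max_prod_le (fun i => ?_) ha ha1
        have := AddCircle.norm_le_half_period (1 : ℝ) (x := β i) one_ne_zero
        rw [abs_one] at this
        linarith
    _ = ENNReal.ofReal (∫ β : Fin d → UnitAddCircle, ∏ i, 1 / max ‖β i‖ a) := by
        rw [ofReal_integral_eq_lintegral_ofReal]
        · exact hcp.integrable_of_hasCompactSupport (HasCompactSupport.of_compactSpace _)
        · exact .of_forall fun β => prod_nonneg fun i _ => hpos _
    _ ≤ ENNReal.ofReal ((4 * Real.log (1 + 1 / a)) ^ d) := by
        refine ENNReal.ofReal_le_ofReal ?_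
        rw [integral_fintype_prod_volume_eq_pow (ι := Fin d) (fun x : UnitAddCircle => 1 / max ‖x‖ a),
          Fintype.card_fin]
        gcongr
        exact integral_one_div_max_norm_le ha

lemma measurePreserving_nsmul_pi (d : ℕ) {n : ℕ} (hn : 1 ≤ n) :
    MeasurePreserving fun β : Fin d → UnitAddCircle => n • β := by
  have h : MeasurePreserving fun x : UnitAddCircle => n • x := by
    rcases hn.eq_or_lt with rfl | h
    · simp only [one_smul]
      exact MeasurePreserving.id _
    · exact (AddCircle.ergodic_nsmul h).toMeasurePreserving
  exact volume_preserving_pi (α' := fun _ : Fin d => UnitAddCircle)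
    (β' := fun _ : Fin d => UnitAddCircle) fun _ => h

/-- A truncation at height `δ` splits `1 / x` into an integrable part on `[δ, T)` and the
indicator of `x < δ`. -/
def truncWeight (δ T B x : ℝ) : ℝ :=
  (if δ ≤ x ∧ x < T then 1 / x else 0) / B + if x < δ then 1 else 0

lemma truncWeight_nonneg {δ T B : ℝ} (hδ : 0 < δ) (hB : 0 < B) (x : ℝ) :
    0 ≤ truncWeight δ T B x := by
  unfold truncWeight
  refine add_nonneg (div_nonneg ?_ hB.le) (by split_ifs <;> simp)
  split_ifs with h
  · exact one_div_nonneg.2 (hδ.le.trans h.1)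
  · exact le_rfl

lemma measurable_truncWeight (δ T B : ℝ) : Measurable (truncWeight δ T B) := by
  unfold truncWeight
  refine Measurable.add (Measurable.div_const ?_ _) ?_
  · exact Measurable.ite (measurableSet_Ico (a := δ) (b := T)) (by fun_prop) measurable_const
  · exact Measurable.ite (measurableSet_Iio (a := δ)) measurable_const measurable_const

lemma sum_truncWeight_le {y δ T B : ℝ} (hy : 0 ≤ y) (hδ : 0 < δ) (hT : δ ≤ T) (hB : 0 < B)
    {M : ℕ} (hM : 1 ≤ M) :
    ∑ n ∈ Icc 1 M, truncWeight δ T B (n * y)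
      ≤ ((1 + Real.log (T / δ)) / B + δ) * (1 / max y (δ / M)) := by
  unfold truncWeight
  rw [sum_add_distrib, ← sum_div, add_mul, div_mul_eq_mul_div]
  have h1 := sum_window_le hy hδ hT hM
  have h2 := sum_below_le hy hδ hM
  gcongr

/-- If the truncated weights of all terms sum to less than `1`, then no term lies below `δ`, so the
full sum of reciprocals is controlled. -/
lemma sum_filter_le_of_sum_truncWeight_lt_one {ι : Type*} {s : Finset ι} {x : ι → ℝ} {δ T B : ℝ}
    (hδ : 0 < δ) (hB : 0 < B) (h : ∑ n ∈ s, truncWeight δ T B (x n) < 1) :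
    ∑ n ∈ s.filter (fun n => x n < T), 1 / x n ≤ B := by
  have hnn := fun n => truncWeight_nonneg (T := T) hδ hB (x n)
  have hge : ∀ n ∈ s, δ ≤ x n := by
    intro n hn
    by_contra! hlt
    have h1 := single_le_sum (f := fun n => truncWeight δ T B (x n)) (fun i _ => hnn i) hn
    have h2 : truncWeight δ T B (x n) = 1 := by simp [truncWeight, hlt, hlt.not_ge]
    simp only [h2] at h1
    linarith
  have heq : ∑ n ∈ s, truncWeight δ T B (x n) =
      (∑ n ∈ s.filter (fun n => x n < T), 1 / x n) / B := by
    rw [sum_filter, sum_div]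
    refine sum_congr rfl fun n hn => ?_
    simp [truncWeight, hge n hn, (hge n hn).not_gt]
  rw [heq, div_lt_one hB] at h
  exact h.le

lemma lintegral_sum_truncWeight_le (d : ℕ) {δ T B : ℝ} (hδ : 0 < δ) (hδ1 : δ ≤ 1) (hT : δ ≤ T)
    (hB : 0 < B) {M : ℕ} (hM : 1 ≤ M) :
    ∫⁻ β : Fin d → UnitAddCircle,
        ENNReal.ofReal (∑ n ∈ Icc 1 M, truncWeight δ T B (n * prodNorm (n • β)))
      ≤ ENNReal.ofReal
          (((1 + Real.log (T / δ)) / B + δ) * (4 * Real.log (1 + M / δ)) ^ d) := by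
  have hM' : (1 : ℝ) ≤ M := by exact_mod_cast hM
  have hlog : 0 ≤ Real.log (T / δ) := Real.log_nonneg ((one_le_div hδ).2 hT)
  have hc : 0 ≤ (1 + Real.log (T / δ)) / B + δ := by positivity
  have hnn := fun x => truncWeight_nonneg (T := T) hδ hB x
  have hmeas : ∀ n : ℕ, Measurable fun β : Fin d → UnitAddCircle =>
      ENNReal.ofReal (truncWeight δ T B (n * prodNorm β)) := fun n =>
    ((measurable_truncWeight δ T B).comp
      (continuous_prodNorm.measurable.const_mul _)).ennreal_ofReal
  have hmp : ∀ n ∈ Icc 1 M, MeasurePreserving fun β : Fin d → UnitAddCircle => n • β :=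
    fun n hn => measurePreserving_nsmul_pi d (mem_Icc.1 hn).1
  calc ∫⁻ β : Fin d → UnitAddCircle,
        ENNReal.ofReal (∑ n ∈ Icc 1 M, truncWeight δ T B (n * prodNorm (n • β)))
      = ∑ n ∈ Icc 1 M, ∫⁻ β : Fin d → UnitAddCircle,
          ENNReal.ofReal (truncWeight δ T B (n * prodNorm (n • β))) := by
        simp_rw [ENNReal.ofReal_sum_of_nonneg fun n _ => hnn _]
        exact lintegral_finsetSum' _ fun n hn => ((hmeas n).comp (hmp n hn).measurable).aemeasurable
    _ = ∑ n ∈ Icc 1 M, ∫⁻ β : Fin d → UnitAddCircle,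
          ENNReal.ofReal (truncWeight δ T B (n * prodNorm β)) :=
        sum_congr rfl fun n hn => (hmp n hn).lintegral_comp (hmeas n)
    _ = ∫⁻ β : Fin d → UnitAddCircle,
          ENNReal.ofReal (∑ n ∈ Icc 1 M, truncWeight δ T B (n * prodNorm β)) := by
        simp_rw [ENNReal.ofReal_sum_of_nonneg fun n _ => hnn _]
        exact (lintegral_finsetSum _ fun n _ => hmeas n).symm
    _ ≤ ∫⁻ β : Fin d → UnitAddCircle, ENNReal.ofReal ((1 + Real.log (T / δ)) / B + δ) *
          ENNReal.ofReal (1 / max (prodNorm β) (δ / M)) := by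
        refine lintegral_mono fun β => ?_
        rw [← ENNReal.ofReal_mul hc]
        exact ENNReal.ofReal_le_ofReal (sum_truncWeight_le (prodNorm_nonneg β) hδ hT hB hM)
    _ ≤ _ := by
        rw [lintegral_const_mul' _ _ ENNReal.ofReal_ne_top, ENNReal.ofReal_mul hc]
        have := lintegral_one_div_max_prodNorm_le d (a := δ / M) (by positivity)
          ((div_le_one (by positivity)).2 (hδ1.trans hM'))
        rw [one_div_div] at this
        gcongr

lemma ae_exists_sum_le (d : ℕ) {M : ℕ → ℕ} {δ T B : ℕ → ℝ} (hM : ∀ k, 1 ≤ M k)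
    (hδ : ∀ k, 0 < δ k) (hδ1 : ∀ k, δ k ≤ 1) (hT : ∀ k, δ k ≤ T k) (hB : ∀ k, 0 < B k)
    (hsum : Summable fun k =>
      ((1 + Real.log (T k / δ k)) / B k + δ k) * (4 * Real.log (1 + M k / δ k)) ^ d) :
    ∀ᵐ β : Fin d → UnitAddCircle, ∃ C : ℝ, ∀ k,
      ∑ n ∈ (Icc 1 (M k)).filter (fun n : ℕ => n * prodNorm (n • β) < T k),
        1 / (n * prodNorm (n • β)) ≤ C * B k := by
  set W : ℕ → (Fin d → UnitAddCircle) → ENNReal := fun k β =>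
    ENNReal.ofReal (∑ n ∈ Icc 1 (M k), truncWeight (δ k) (T k) (B k) (n * prodNorm (n • β))) with hW
  have hmeas : ∀ k, Measurable (W k) := fun k => by
    refine (Finset.measurable_fun_sum _ fun n _ => ?_).ennreal_ofReal
    refine (measurable_truncWeight _ _ _).comp (Measurable.const_mul ?_ _)
    exact (continuous_prodNorm.comp (continuous_const_smul n)).measurable
  have hfin : ∫⁻ β, ∑' k, W k β ≠ ⊤ := by
    rw [lintegral_tsum fun k => (hmeas k).aemeasurable]
    refine ne_top_of_le_ne_top hsum.tsum_ofReal_ne_top (ENNReal.tsum_le_tsum fun k => ?_)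
    exact lintegral_sum_truncWeight_le d (hδ k) (hδ1 k) (hT k) (hB k) (hM k)
  filter_upwards [ae_lt_top (Measurable.tsum hmeas) hfin] with β hβ
  have hlt := (ENNReal.tendsto_atTop_zero_of_tsum_ne_top hβ.ne).eventually_lt_const one_pos
  have hbdd : BddAbove (Set.range fun k =>
      (∑ n ∈ (Icc 1 (M k)).filter (fun n : ℕ => n * prodNorm (n • β) < T k),
        1 / (n * prodNorm (n • β))) / B k) := by
    refine Filter.IsBoundedUnder.bddAbove_range ⟨1, Filter.eventually_map.2 ?_⟩
    filter_upwards [hlt] with k hk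
    rw [div_le_one (hB k)]
    rw [hW, ENNReal.ofReal_lt_one] at hk
    exact sum_filter_le_of_sum_truncWeight_lt_one (hδ k) (hB k) hk
  obtain ⟨C, hC⟩ := hbdd
  exact ⟨C, fun k => (div_le_iff₀ (hB k)).1 (hC ⟨k, rfl⟩)⟩

lemma quasiMeasurePreserving_mk_pi_Icc (d : ℕ) :
    Measure.QuasiMeasurePreserving
      (fun (α : Fin d → ℝ) i => (α i : UnitAddCircle))
      ((volume : Measure (Fin d → ℝ)).restrict (Set.univ.pi fun _ => Set.Icc (0 : ℝ) 1))
      volume := by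
  have h := measurePreserving_pi _ _ fun _ : Fin d => UnitAddCircle.measurePreserving_mk 0
  rw [← Measure.restrict_pi_pi, zero_add] at h
  have hae : (Set.univ.pi fun _ : Fin d => Set.Ioc (0 : ℝ) 1)
      =ᵐ[volume] Set.univ.pi fun _ => Set.Icc (0 : ℝ) 1 := Measure.pi_Ioc_ae_eq_pi_Icc
  rw [← Measure.restrict_congr_set hae]
  exact h.quasiMeasurePreserving

lemma prodNorm_nsmul_coe {d : ℕ} (n : ℕ) (α : Fin d → ℝ) :
    prodNorm (n • fun i => (α i : UnitAddCircle)) = ∏ i, nid (n * α i) := by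
  refine prod_congr rfl fun i _ => ?_
  rw [Pi.smul_apply, ← AddCircle.coe_nsmul, UnitAddCircle.norm_eq, nsmul_eq_mul, nid]

lemma exists_forall_add_one_le_mul {φ : ℕ → ℝ} (hpos : ∀ n, 0 < φ n) (hmono : Monotone φ)
    (hsum : Summable fun n => 1 / φ n) : ∃ A, 0 < A ∧ ∀ k : ℕ, (k : ℝ) + 1 ≤ A * φ k := by
  refine ⟨∑' n, 1 / φ n, hsum.tsum_pos (fun n => (one_div_pos.2 (hpos n)).le) 0
    (one_div_pos.2 (hpos 0)), fun k => ?_⟩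
  have h1 := hsum.sum_le_tsum (range (k + 1)) fun n _ => (one_div_pos.2 (hpos n)).le
  have h2 : ((k : ℝ) + 1) * (1 / φ k) ≤ ∑ n ∈ range (k + 1), 1 / φ n := by
    have := card_nsmul_le_sum (range (k + 1)) (fun n => 1 / φ n) (1 / φ k) fun n hn =>
      one_div_le_one_div_of_le (hpos n) (hmono (by simpa [Nat.lt_succ_iff] using hn))
    simpa using this
  rw [← div_le_iff₀ (hpos k), div_eq_mul_one_div]
  exact h2.trans h1

lemma summable_truncation_error (d s : ℕ) {φ : ℕ → ℝ} (hpos : ∀ n, 0 < φ n)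
    (hsum : Summable fun n => 1 / φ n) :
    Summable fun k : ℕ =>
      ((1 + Real.log (Real.exp (k * s) / Real.exp (-(k * (d + 1))))) /
          (Real.exp k ^ d * (k + 1) * φ k) + Real.exp (-(k * (d + 1)))) *
        (4 * Real.log (1 + ⌊Real.exp (2 * Real.exp k + 2 * k)⌋₊ /
          Real.exp (-(k * (d + 1))))) ^ d := by
  set K : ℝ := (4 * (d + 6)) ^ d
  have hexp : Summable fun k : ℕ => Real.exp (-k) := Real.summable_exp_neg_nat
  refine Summable.of_nonneg_of_le (fun k => ?_) (fun k => ?_)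
    (((hsum.mul_left ((s : ℝ) + d + 2)).add hexp).mul_left K)
  · have h1 : 0 ≤ Real.log (Real.exp (k * s) / Real.exp (-(k * (d + 1)))) := by
      rw [← Real.exp_sub, Real.log_exp, sub_neg_eq_add]
      positivity
    have h2 : 0 ≤ Real.log (1 + ⌊Real.exp (2 * Real.exp k + 2 * k)⌋₊ /
        Real.exp (-(k * (d + 1)))) := Real.log_nonneg (le_add_of_nonneg_right (by positivity))
    have := hpos k
    positivity
  · have hk0 : (0 : ℝ) ≤ k := Nat.cast_nonneg k
    have hd0 : (0 : ℝ) ≤ d := Nat.cast_nonneg d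
    have hs0 : (0 : ℝ) ≤ s := Nat.cast_nonneg s
    have hek := Real.add_one_le_exp (k : ℝ)
    have hφ := hpos k
    have hlog : Real.log (1 + ⌊Real.exp (2 * Real.exp k + 2 * k)⌋₊ / Real.exp (-(k * (d + 1))))
        ≤ (d + 6) * Real.exp k := by
      have hx : 0 ≤ 2 * Real.exp k + 2 * k + k * (d + 1) := by positivity
      rw [Real.log_le_iff_le_exp (by positivity)]
      calc 1 + (⌊Real.exp (2 * Real.exp k + 2 * k)⌋₊ : ℝ) / Real.exp (-(k * (d + 1)))
          ≤ 1 + Real.exp (2 * Real.exp k + 2 * k) / Real.exp (-(k * (d + 1))) := by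
            gcongr
            exact Nat.floor_le (Real.exp_pos _).le
        _ = 1 + Real.exp (2 * Real.exp k + 2 * k + k * (d + 1)) := by
            rw [← Real.exp_sub, sub_neg_eq_add]
        _ ≤ Real.exp 1 * Real.exp (2 * Real.exp k + 2 * k + k * (d + 1)) := by
            nlinarith [Real.add_one_le_exp (1 : ℝ), Real.one_le_exp hx]
        _ ≤ Real.exp ((d + 6) * Real.exp k) := by
            rw [← Real.exp_add, Real.exp_le_exp]
            nlinarith
    have hpow : (4 * Real.log (1 + ⌊Real.exp (2 * Real.exp k + 2 * k)⌋₊ /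
        Real.exp (-(k * (d + 1))))) ^ d ≤ K * Real.exp k ^ d := by
      rw [← mul_pow, mul_assoc]
      gcongr
      exact mul_nonneg (by norm_num)
        (Real.log_nonneg (le_add_of_nonneg_right (by positivity)))
    rw [← Real.exp_sub, Real.log_exp, sub_neg_eq_add]
    calc _ ≤ ((1 + (k * s + k * (d + 1))) / (Real.exp k ^ d * (k + 1) * φ k)
          + Real.exp (-(k * (d + 1)))) * (K * Real.exp k ^ d) := by gcongr
      _ = K * ((1 + (k * s + k * (d + 1))) / (k + 1) * (1 / φ k)
          + Real.exp (-(k * (d + 1))) * Real.exp k ^ d) := by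
          field_simp
      _ ≤ K * ((s + d + 2) * (1 / φ k) + Real.exp (-k)) := by
          have h1 : (1 + (k * s + k * (d + 1))) / ((k : ℝ) + 1) ≤ s + d + 2 := by
            rw [div_le_iff₀ (by positivity)]
            nlinarith
          have h2 : Real.exp (-(k * (d + 1))) * Real.exp k ^ d = Real.exp (-k) := by
            rw [← Real.exp_nat_mul, ← Real.exp_add]
            ring_nf
          rw [h2]
          gcongr

/-- For a.e. `α ∈ [0,1]^d`: the sum of `1/(n·∏‖nα_i‖)` over `1 ≤ n ≤ N²(log N)²` with
`n·∏‖nα_i‖ < (log N)^s` is at most `C·(log N)^d·φ(log log N)^{d+1}`. -/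
theorem stmt_12 (d : ℕ) (hd : 1 ≤ d) (s : ℕ) (φ : ℕ → ℝ) (hφpos : ∀ n, 0 < φ n)
    (hφmono : Monotone φ) (hφsum : Summable fun n => 1 / φ n) :
    ∀ᵐ α ∂((volume : Measure (Fin d → ℝ)).restrict
        (Set.univ.pi fun _ : Fin d => Set.Icc (0 : ℝ) 1)),
      ∃ C : ℝ, ∀ N : ℕ, 3 ≤ N →
        ∑ n ∈ (Finset.Icc 1 (Nat.floor ((N : ℝ) ^ 2 * Real.log N ^ 2))).filter
            (fun n : ℕ => (n : ℝ) * ∏ i : Fin d, nid ((n : ℝ) * α i) < Real.log N ^ s),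
            1 / ((n : ℝ) * ∏ i : Fin d, nid ((n : ℝ) * α i)) ≤
          C * Real.log N ^ d * φ (Nat.ceil (Real.log (Real.log N))) ^ (d + 1) := by
  obtain ⟨A, hA, hAφ⟩ := exists_forall_add_one_le_mul hφpos hφmono hφsum
  have hae := ae_exists_sum_le d
    (M := fun k => ⌊Real.exp (2 * Real.exp k + 2 * k)⌋₊)
    (δ := fun k => Real.exp (-(k * (d + 1)))) (T := fun k => Real.exp (k * s))
    (B := fun k => Real.exp k ^ d * (k + 1) * φ k)
    (fun k => Nat.one_le_floor_iff _ |>.2 (Real.one_le_exp (by positivity)))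
    (fun k => Real.exp_pos _)
    (fun k => Real.exp_le_one_iff.2 (neg_nonpos.2 (by positivity)))
    (fun k => Real.exp_le_exp.2 ((neg_nonpos.2 (by positivity)).trans (by positivity)))
    (fun k => by have := hφpos k; positivity)
    (summable_truncation_error d s hφpos hφsum)
  filter_upwards [(quasiMeasurePreserving_mk_pi_Icc d).ae hae] with α ⟨C, hC⟩
  simp only [prodNorm_nsmul_coe] at hC
  refine ⟨|C| * Real.exp 1 ^ d * A / φ 0 ^ (d - 1), fun N hN => ?_⟩
  have hN3 : (3 : ℝ) ≤ N := by exact_mod_cast hN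
  have hN0 : (0 : ℝ) < N := by linarith
  have hlog0 : 0 < Real.log N := Real.log_pos (by linarith)
  set k := ⌈Real.log (Real.log N)⌉₊
  have hloglog : 0 < Real.log (Real.log N) := by
    refine Real.log_pos ((Real.lt_log_iff_exp_lt hN0).2 ?_)
    linarith [Real.exp_one_lt_d9]
  have hle : Real.log N ≤ Real.exp k := (Real.log_le_iff_le_exp hlog0).1 (Nat.le_ceil _)
  have hge : Real.exp k ≤ Real.exp 1 * Real.log N := by
    rw [← Real.exp_log hlog0, ← Real.exp_add, Real.exp_le_exp, add_comm]
    exact (Nat.ceil_lt_add_one hloglog.le).le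
  have hsub : (Icc 1 ⌊(N : ℝ) ^ 2 * Real.log N ^ 2⌋₊).filter
        (fun n : ℕ => (n : ℝ) * ∏ i, nid (n * α i) < Real.log N ^ s) ⊆
      (Icc 1 ⌊Real.exp (2 * Real.exp k + 2 * k)⌋₊).filter
        (fun n : ℕ => (n : ℝ) * ∏ i, nid (n * α i) < Real.exp (k * s)) := by
    intro n hn
    rw [mem_filter, mem_Icc] at hn ⊢
    refine ⟨⟨hn.1.1, hn.1.2.trans (Nat.floor_le_floor ?_)⟩, hn.2.trans_le ?_⟩
    · rw [Real.exp_add, two_mul, two_mul (k : ℝ), Real.exp_add, Real.exp_add, ← sq, ← sq]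
      have : (N : ℝ) ≤ Real.exp (Real.exp k) := (Real.log_le_iff_le_exp hN0).1 hle
      gcongr
    · rw [mul_comm, Real.exp_nat_mul]
      gcongr
  have hnid : ∀ y, 0 ≤ nid y := fun y => abs_nonneg _
  have hφk := hφpos k
  have hφ0 := hφpos 0
  have hφsq : φ k * φ k ≤ φ k ^ (d + 1) / φ 0 ^ (d - 1) := by
    rw [le_div_iff₀ (by positivity)]
    calc φ k * φ k * φ 0 ^ (d - 1) ≤ φ k * φ k * φ k ^ (d - 1) := by
          gcongr
          exact hφmono (Nat.zero_le k)
      _ = φ k ^ (d + 1) := by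
          rw [show d + 1 = 2 + (d - 1) by omega, pow_add, sq]
  calc _ ≤ ∑ n ∈ (Icc 1 ⌊Real.exp (2 * Real.exp k + 2 * k)⌋₊).filter
        (fun n : ℕ => (n : ℝ) * ∏ i, nid (n * α i) < Real.exp (k * s)),
          1 / ((n : ℝ) * ∏ i, nid (n * α i)) :=
        sum_le_sum_of_subset_of_nonneg hsub fun n _ _ =>
          one_div_nonneg.2 (mul_nonneg (Nat.cast_nonneg _) (prod_nonneg fun i _ => hnid _))
    _ ≤ C * (Real.exp k ^ d * (k + 1) * φ k) := hC k
    _ ≤ |C| * ((Real.exp 1 * Real.log N) ^ d * (A * φ k) * φ k) := by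
        gcongr
        · exact le_abs_self C
        · exact hAφ k
    _ = |C| * Real.exp 1 ^ d * A * Real.log N ^ d * (φ k * φ k) := by
        rw [mul_pow]; ring
    _ ≤ |C| * Real.exp 1 ^ d * A * Real.log N ^ d * (φ k ^ (d + 1) / φ 0 ^ (d - 1)) := by
        gcongr
    _ = _ := by ring
end
end
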